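/- Let g be a positive integer, τ ∈ ℍ_g, k', k'' positive integers, c', d', c'', d'' ∈ ℝ^g, and z', z'' ∈ ℂ^g. Then ϑ[c'/k', d'](k'τ, z') · ϑ[c''/k'', d''](k''τ, z'') = Σ_{w ∈ {0,…,k'+k''−1}^g} ϑ[(k'k''w + k''c' − k'c'')/(k'k''(k'+k'')), k''d' − k'd''](k'k''(k'+k'')τ, k''z' − k'z'') · ϑ[(k'w + c' + c'')/(k'+k''), d' + d'']((k'+k'')τ, z' + z''). (The general multiplication formula for shifted theta functions.) -/

import Mathlib

open Complex Matrix BigOperators Real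

noncomputable section

/-- The quadratic form `vᵀ τ v = ∑_{j,k} τ_{jk} v_j v_k`. -/
def qf {g : ℕ} (τ : Matrix (Fin g) (Fin g) ℂ) (v : Fin g → ℂ) : ℂ :=
  ∑ j, ∑ k, v j * τ j k * v k

/-- The pairing `vᵀ w = ∑_j v_j w_j`. -/
def dotc {g : ℕ} (v w : Fin g → ℂ) : ℂ := ∑ j, v j * w j

/-- The Siegel upper half space `ℍ_g`. -/
def Siegel (g : ℕ) : Set (Matrix (Fin g) (Fin g) ℂ) :=
  {τ | τ.IsSymm ∧ (τ.map Complex.im).PosDef}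

/-- The shifted Riemann theta function
`ϑ[c,d](τ,z) = ∑_{n ∈ ℤ^g} exp(πi·(n+c)ᵀτ(n+c) + 2πi·(n+c)ᵀ(z+d))`. -/
def thetaS {g : ℕ} (c d : Fin g → ℝ) (τ : Matrix (Fin g) (Fin g) ℂ)
    (z : Fin g → ℂ) : ℂ :=
  ∑' n : Fin g → ℤ,
    Complex.exp ((π : ℂ) * I * qf τ (fun j => (n j : ℂ) + (c j : ℂ)) +
      2 * (π : ℂ) * I * dotc (fun j => (n j : ℂ) + (c j : ℂ)) (z + fun j => (d j : ℂ)))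

/-!
Expand the left side as a double series over `(n', n'') ∈ ℤ^g × ℤ^g`. The quadratic form
`k' aᵀτa + k'' bᵀτb` diagonalizes in the coordinates `a = s + k'' x`, `b = s - k' x`, where it
becomes `k'k''(k' + k'') xᵀτx + (k' + k'') sᵀτs`. Since `a - b = (k' + k'') x`, integral pairs
`(a, b)` correspond to integral pairs `(x, s)` only up to the residue `w` of `a - b` modulo
`k' + k''`: this residue is the summation index on the right, and it shifts the characteristics.
The rearrangement is legitimate because the theta series converges absolutely.
-/

lemma tsum_mul_tsum_eq_sum_tsum_mul_tsum {R W α β γ δ : Type*} [NormedRing R] [CompleteSpace R]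
    [Fintype W] (e : W × γ × δ ≃ α × β) {A : α → R} {B : β → R} {C : W → γ → R} {D : W → δ → R}
    (hA : Summable fun n => ‖A n‖) (hB : Summable fun n => ‖B n‖)
    (hC : ∀ w, Summable fun n => ‖C w n‖) (hD : ∀ w, Summable fun n => ‖D w n‖)
    (hterm : ∀ w x s, A (e (w, x, s)).1 * B (e (w, x, s)).2 = C w x * D w s) :
    (∑' n, A n) * ∑' n, B n = ∑ w, (∑' x, C w x) * ∑' s, D w s := by
  have hsum : Summable fun p : W × γ × δ => C p.1 p.2.1 * D p.1 p.2.2 :=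
    (e.summable_iff.2 (summable_mul_of_summable_norm hA hB)).congr fun p => hterm p.1 p.2.1 p.2.2
  calc (∑' n, A n) * ∑' n, B n
      = ∑' q : α × β, A q.1 * B q.2 := tsum_mul_tsum_of_summable_norm hA hB
    _ = ∑' p : W × γ × δ, C p.1 p.2.1 * D p.1 p.2.2 :=
        (e.tsum_eq _).symm.trans (tsum_congr fun p => hterm p.1 p.2.1 p.2.2)
    _ = ∑ w, ∑' q : γ × δ, C w q.1 * D w q.2 := by rw [hsum.tsum_prod, tsum_fintype]
    _ = ∑ w, (∑' x, C w x) * ∑' s, D w s :=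
        Finset.sum_congr rfl fun w _ => (tsum_mul_tsum_of_summable_norm (hC w) (hD w)).symm

section

variable {ι : Type*} [Fintype ι]

lemma summable_pi_prod_of_nonneg {κ : ι → Type*} {f : ∀ i, κ i → ℝ} (hf : ∀ i k, 0 ≤ f i k)
    (hsum : ∀ i, Summable (f i)) : Summable fun x : ∀ i, κ i => ∏ i, f i (x i) := by
  classical
  refine summable_of_sum_le (c := ∏ i, ∑' k, f i k)
    (fun x => Finset.prod_nonneg fun i _ => hf i (x i)) fun s => ?_
  have hs : s ⊆ Fintype.piFinset fun i => s.image fun x => x i := fun x hx =>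
    Fintype.mem_piFinset.2 fun i => Finset.mem_image_of_mem (fun x => x i) hx
  calc ∑ x ∈ s, ∏ i, f i (x i)
      ≤ ∑ x ∈ Fintype.piFinset fun i => s.image fun x => x i, ∏ i, f i (x i) :=
        Finset.sum_le_sum_of_subset_of_nonneg hs fun x _ _ =>
          Finset.prod_nonneg fun i _ => hf i (x i)
    _ = ∏ i, ∑ k ∈ s.image fun x => x i, f i k := (Finset.prod_univ_sum _ _).symm
    _ ≤ ∏ i, ∑' k, f i k :=
        Finset.prod_le_prod (fun i _ => Finset.sum_nonneg fun k _ => hf i k) fun i _ =>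
          (hsum i).sum_le_tsum _ fun k _ => hf i k

lemma summable_exp_neg_shifted_quadratic {ε : ℝ} (hε : 0 < ε) (c y : ℝ) :
    Summable fun n : ℤ => Real.exp (-π * (ε * (n + c) ^ 2 + 2 * (n + c) * y)) := by
  have hsum := ((summable_jacobiTheta₂_term_iff (I * (ε * c + y : ℝ)) (I * ε)).2
    (by simpa using hε)).norm.mul_left (Real.exp (-π * (ε * c ^ 2 + 2 * c * y)))
  refine hsum.congr fun n => ?_
  rw [norm_jacobiTheta₂_term, ← Real.exp_add, I_mul_im, I_mul_im, ofReal_re, ofReal_re]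
  ring_nf

open scoped MatrixOrder in
lemma exists_pos_mul_dotProduct_le_of_posDef {Y : Matrix ι ι ℝ} (hY : Y.PosDef) :
    ∃ ε > 0, ∀ x : ι → ℝ, ε * (x ⬝ᵥ x) ≤ x ⬝ᵥ Y *ᵥ x := by
  classical
  rcases isEmpty_or_nonempty ι with _ | _
  · exact ⟨1, one_pos, fun x => by simp [dotProduct]⟩
  obtain ⟨ε, hε, hle⟩ := (CFC.exists_pos_algebraMap_le_iff hY.isHermitian).2
    fun _ hx => hY.isStrictlyPositive.spectrum_pos hx
  refine ⟨ε, hε, fun x => ?_⟩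
  have hnonneg := (Matrix.le_iff.1 hle).dotProduct_mulVec_nonneg x
  simpa [Matrix.sub_mulVec, Algebra.algebraMap_eq_smul_one, Matrix.smul_mulVec] using hnonneg

end

section ThetaTerm

variable {g : ℕ}

/-- The summand `exp(πi·vᵀτv + 2πi·vᵀu)` of the theta series. In `ϑ[c,d](τ,z)` it is evaluated
at `v = n + c` and `u = z + d`. -/
def thetaTerm (τ : Matrix (Fin g) (Fin g) ℂ) (v u : Fin g → ℂ) : ℂ :=
  Complex.exp (π * I * qf τ v + 2 * π * I * dotc v u)

lemma thetaS_eq_tsum_thetaTerm (c d : Fin g → ℝ) (τ : Matrix (Fin g) (Fin g) ℂ)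
    (z : Fin g → ℂ) :
    thetaS c d τ z = ∑' n : Fin g → ℤ,
      thetaTerm τ (fun j => (n j : ℂ) + c j) (z + fun j => (d j : ℂ)) :=
  rfl

lemma norm_thetaTerm_ofReal (τ : Matrix (Fin g) (Fin g) ℂ) (x : Fin g → ℝ) (u : Fin g → ℂ) :
    ‖thetaTerm τ (fun j => (x j : ℂ)) u‖
      = Real.exp (-π * (x ⬝ᵥ τ.map im *ᵥ x + 2 * ∑ j, x j * (u j).im)) := by
  have hqf : (qf τ fun j => (x j : ℂ)).im = x ⬝ᵥ τ.map im *ᵥ x := by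
    simp [qf, im_sum, dotProduct, mulVec, Finset.mul_sum, mul_assoc]
  have hdotc : (dotc (fun j => (x j : ℂ)) u).im = ∑ j, x j * (u j).im := by
    simp [dotc, im_sum]
  rw [thetaTerm, Complex.norm_exp, ← hqf, ← hdotc]
  simp only [add_re, mul_re, mul_im, I_re, I_im, ofReal_re, ofReal_im, re_ofNat, im_ofNat]
  ring_nf

lemma summable_norm_thetaTerm {τ : Matrix (Fin g) (Fin g) ℂ} (hτ : (τ.map im).PosDef)
    (c : Fin g → ℝ) (u : Fin g → ℂ) :
    Summable fun n : Fin g → ℤ => ‖thetaTerm τ (fun j => (n j : ℂ) + c j) u‖ := by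
  obtain ⟨ε, hε, hcoercive⟩ := exists_pos_mul_dotProduct_le_of_posDef hτ
  refine (summable_pi_prod_of_nonneg (fun _ _ => (Real.exp_pos _).le) fun j =>
    summable_exp_neg_shifted_quadratic hε (c j) (u j).im).of_nonneg_of_le
      (fun _ => norm_nonneg _) fun n => ?_
  set x : Fin g → ℝ := fun j => n j + c j with hx
  calc ‖thetaTerm τ (fun j => (n j : ℂ) + c j) u‖
      = Real.exp (-π * (x ⬝ᵥ τ.map im *ᵥ x + 2 * ∑ j, x j * (u j).im)) := by
        simpa [hx] using norm_thetaTerm_ofReal τ x u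
    _ ≤ Real.exp (-π * (ε * (x ⬝ᵥ x) + 2 * ∑ j, x j * (u j).im)) :=
        Real.exp_le_exp.2 <| mul_le_mul_of_nonpos_left (by gcongr; exact hcoercive x)
          (neg_nonpos.2 Real.pi_pos.le)
    _ = ∏ j, Real.exp (-π * (ε * x j ^ 2 + 2 * x j * (u j).im)) := by
        simp only [← Real.exp_sum, ← Finset.mul_sum, Finset.sum_add_distrib, dotProduct, sq,
          mul_assoc]

open scoped ComplexOrder in
lemma posDef_map_im_smul {τ : Matrix (Fin g) (Fin g) ℂ} (hτ : (τ.map im).PosDef) {a : ℂ}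
    (ha : 0 < a) : ((a • τ).map im).PosDef := by
  obtain ⟨hre, him⟩ := Complex.pos_iff.1 ha
  have hmap : (a • τ).map im = a.re • τ.map im := by
    ext i j
    simp [← him]
  exact hmap ▸ hτ.smul hre

lemma qf_smul_add_qf_smul (τ : Matrix (Fin g) (Fin g) ℂ) (k l : ℂ) (x s : Fin g → ℂ) :
    qf (k • τ) (s + l • x) + qf (l • τ) (s - k • x)
      = qf ((k * l * (k + l)) • τ) x + qf ((k + l) • τ) s := by
  simp only [qf, ← Finset.sum_add_distrib, Matrix.smul_apply, Pi.add_apply, Pi.sub_apply,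
    Pi.smul_apply, smul_eq_mul]
  exact Finset.sum_congr rfl fun i _ => Finset.sum_congr rfl fun j _ => by ring

lemma dotc_add_dotc (k l : ℂ) (x s u v : Fin g → ℂ) :
    dotc (s + l • x) u + dotc (s - k • x) v = dotc x (l • u - k • v) + dotc s (u + v) := by
  simp only [dotc, ← Finset.sum_add_distrib, Pi.add_apply, Pi.sub_apply, Pi.smul_apply,
    smul_eq_mul]
  exact Finset.sum_congr rfl fun i _ => by ring

lemma thetaTerm_mul_thetaTerm (τ : Matrix (Fin g) (Fin g) ℂ) (k l : ℂ) (x s u v : Fin g → ℂ) :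
    thetaTerm (k • τ) (s + l • x) u * thetaTerm (l • τ) (s - k • x) v
      = thetaTerm ((k * l * (k + l)) • τ) x (l • u - k • v)
        * thetaTerm ((k + l) • τ) s (u + v) := by
  simp only [thetaTerm, ← Complex.exp_add]
  congr 1
  linear_combination (π * I) * qf_smul_add_qf_smul τ k l x s
    + 2 * π * I * dotc_add_dotc k l x s u v

end ThetaTerm

/-- The decomposition of pairs `(a, b)` of lattice vectors as `a = s + l x + w`, `b = s - k x`,
with `w` the coordinatewise residue of `a - b` modulo `k + l` and `x` the quotient. -/
def latticePairEquiv (ι : Type*) (k l : ℕ) [NeZero (k + l)] :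
    (ι → Fin (k + l)) × (ι → ℤ) × (ι → ℤ) ≃ (ι → ℤ) × (ι → ℤ) where
  toFun p := (fun j => p.2.2 j + l * p.2.1 j + (p.1 j : ℕ), fun j => p.2.2 j - k * p.2.1 j)
  invFun q := (fun j => (Int.divModEquiv (k + l) (q.1 j - q.2 j)).2,
    fun j => (Int.divModEquiv (k + l) (q.1 j - q.2 j)).1,
    fun j => q.2 j + k * (Int.divModEquiv (k + l) (q.1 j - q.2 j)).1)
  left_inv := by
    rintro ⟨w, x, s⟩
    have hdivMod (j : ι) : Int.divModEquiv (k + l) (s j + l * x j + (w j : ℕ) - (s j - k * x j))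
        = (x j, w j) := by
      rw [← Equiv.eq_symm_apply, Int.divModEquiv_symm_apply]
      push_cast
      ring
    simp only [hdivMod, sub_add_cancel]
  right_inv := by
    rintro ⟨a, b⟩
    have hdivMod (j : ι) :
        (Int.divModEquiv (k + l) (a j - b j)).1 * (k + l) + (Int.divModEquiv (k + l) (a j - b j)).2
          = a j - b j := by
      simpa only [Int.divModEquiv_symm_apply, Nat.cast_add] using
        (Int.divModEquiv (k + l)).symm_apply_apply (a j - b j)
    ext j
    · linear_combination hdivMod j
    · exact add_sub_cancel_right _ _

open scoped ComplexOrder in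
/-- The hypotheses `ha` and `hb` say that `(ξ w, σ w)` are the coordinates of `(w + a, b)` under
the change of variables `w + a = σ + l ξ`, `b = σ - k ξ` that diagonalizes the quadratic form. -/
theorem theta_multiplication_formula_general {g k l : ℕ} (hk : 0 < k) (hl : 0 < l)
    {τ : Matrix (Fin g) (Fin g) ℂ} (hτ : (τ.map im).PosDef) (a b d e : Fin g → ℝ)
    (u v : Fin g → ℂ) (ξ σ : (Fin g → Fin (k + l)) → Fin g → ℝ)
    (ha : ∀ w j, σ w j + l * ξ w j = (w j : ℕ) + a j) (hb : ∀ w j, σ w j - k * ξ w j = b j) :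
    thetaS a d ((k : ℂ) • τ) u * thetaS b e ((l : ℂ) • τ) v
      = ∑ w, thetaS (ξ w) (fun j => l * d j - k * e j) (((k : ℂ) * l * (k + l)) • τ)
            ((l : ℂ) • u - (k : ℂ) • v)
          * thetaS (σ w) (fun j => d j + e j) (((k : ℂ) + l) • τ) (u + v) := by
  have : NeZero (k + l) := ⟨by positivity⟩
  simp only [thetaS_eq_tsum_thetaTerm]
  refine tsum_mul_tsum_eq_sum_tsum_mul_tsum (latticePairEquiv (Fin g) k l)
    (summable_norm_thetaTerm (posDef_map_im_smul hτ (by positivity)) _ _)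
    (summable_norm_thetaTerm (posDef_map_im_smul hτ (by positivity)) _ _)
    (fun _ => summable_norm_thetaTerm (posDef_map_im_smul hτ (by positivity)) _ _)
    (fun _ => summable_norm_thetaTerm (posDef_map_im_smul hτ (by positivity)) _ _)
    fun w x s => ?_
  have hfst : (fun j => (((latticePairEquiv (Fin g) k l (w, x, s)).1 j : ℤ) : ℂ) + a j)
      = (fun j => (s j : ℂ) + σ w j) + (l : ℂ) • fun j => (x j : ℂ) + ξ w j := by
    ext j
    have haℂ : (σ w j : ℂ) + l * ξ w j = (w j : ℕ) + a j := mod_cast ha w j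
    simp only [latticePairEquiv, Equiv.coe_fn_mk, Pi.add_apply, Pi.smul_apply, smul_eq_mul]
    push_cast
    linear_combination -haℂ
  have hsnd : (fun j => (((latticePairEquiv (Fin g) k l (w, x, s)).2 j : ℤ) : ℂ) + b j)
      = (fun j => (s j : ℂ) + σ w j) - (k : ℂ) • fun j => (x j : ℂ) + ξ w j := by
    ext j
    have hbℂ : (σ w j : ℂ) - k * ξ w j = b j := mod_cast hb w j
    simp only [latticePairEquiv, Equiv.coe_fn_mk, Pi.sub_apply, Pi.smul_apply, smul_eq_mul]
    push_cast
    linear_combination -hbℂ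
  rw [hfst, hsnd, thetaTerm_mul_thetaTerm]
  congr 2 <;> ext j <;>
    simp only [Pi.add_apply, Pi.sub_apply, Pi.smul_apply, smul_eq_mul] <;> push_cast <;> ring

/-- the general multiplication formula for shifted theta functions:
`ϑ[c'/k', d'](k'τ, z') · ϑ[c''/k'', d''](k''τ, z'')
  = ∑_{w ∈ {0,…,k'+k''−1}^g}
      ϑ[(k'k''w + k''c' − k'c'')/(k'k''(k'+k'')), k''d' − k'd''](k'k''(k'+k'')τ, k''z' − k'z'')
      · ϑ[(k'w + c' + c'')/(k'+k''), d' + d'']((k'+k'')τ, z' + z'')`. -/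
theorem theta_multiplication_formula (g k' k'' : ℕ)
    (hg : 0 < g) (hk' : 0 < k') (hk'' : 0 < k'')
    (τ : Matrix (Fin g) (Fin g) ℂ) (hτ : τ ∈ Siegel g)
    (c' d' c'' d'' : Fin g → ℝ) (z' z'' : Fin g → ℂ) :
    thetaS (fun j => c' j / (k' : ℝ)) d' ((k' : ℂ) • τ) z'
      * thetaS (fun j => c'' j / (k'' : ℝ)) d'' ((k'' : ℂ) • τ) z''
    = ∑ w : Fin g → Fin (k' + k''),
        thetaS
          (fun j => ((k' : ℝ) * (k'' : ℝ) * ((w j : ℕ) : ℝ)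
              + (k'' : ℝ) * c' j - (k' : ℝ) * c'' j)
            / ((k' : ℝ) * (k'' : ℝ) * ((k' : ℝ) + (k'' : ℝ))))
          (fun j => (k'' : ℝ) * d' j - (k' : ℝ) * d'' j)
          (((k' : ℂ) * (k'' : ℂ) * ((k' : ℂ) + (k'' : ℂ))) • τ)
          ((k'' : ℂ) • z' - (k' : ℂ) • z'')
        * thetaS
            (fun j => ((k' : ℝ) * ((w j : ℕ) : ℝ) + c' j + c'' j)
              / ((k' : ℝ) + (k'' : ℝ)))
            (fun j => d' j + d'' j)
            (((k' : ℂ) + (k'' : ℂ)) • τ)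
            (z' + z'') := by
  refine theta_multiplication_formula_general hk' hk'' hτ.2 _ _ _ _ _ _ _ _
    (fun w j => ?_) (fun w j => ?_)
  all_goals
    field_simp
    ring
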